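/- Let D be a digraph that has at least one out-branching and contains no useless arcs. If ℓ(D) ≥ 3k, then ℓ_s(D) ≥ k. -/

import Mathlib

/-- A (finite, loopless) directed graph, given by its vertex set and arc set. -/
structure DirGraph (V : Type) where
  verts : Set V
  arcs : Set (V × V)

namespace DirGraph

variable {V : Type}

/-- Every arc joins two distinct vertices of the digraph. -/
def WellFormed (D : DirGraph V) : Prop :=
  ∀ a ∈ D.arcs, a.1 ∈ D.verts ∧ a.2 ∈ D.verts ∧ a.1 ≠ a.2

/-- `T` is a subgraph of `D`. -/
def IsSubgraph (T D : DirGraph V) : Prop :=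
  T.verts ⊆ D.verts ∧ T.arcs ⊆ D.arcs

/-- The in-degree of a vertex. -/
noncomputable def inDeg (D : DirGraph V) (v : V) : ℕ :=
  {a ∈ D.arcs | a.2 = v}.ncard

/-- The out-degree of a vertex. -/
noncomputable def outDeg (D : DirGraph V) (v : V) : ℕ :=
  {a ∈ D.arcs | a.1 = v}.ncard

/-- A dipath in `D`: a nonempty list of distinct vertices of `D`,
consecutive ones being joined by arcs of `D`. -/
def IsDipath (D : DirGraph V) (l : List V) : Prop :=
  l ≠ [] ∧ l.Nodup ∧ (∀ v ∈ l, v ∈ D.verts) ∧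
    l.Chain' (fun u v => (u, v) ∈ D.arcs)

/-- `v` is reachable from `u` by a dipath of `D` (in particular,
every vertex of `D` reaches itself). -/
def Reaches (D : DirGraph V) (u v : V) : Prop :=
  ∃ l : List V, D.IsDipath l ∧ l.head? = some u ∧ l.getLast? = some v

/-- `R_D(u)`: the set of vertices reachable from `u` in `D`. -/
def reachSet (D : DirGraph V) (u : V) : Set V := {v | D.Reaches u v}

/-- `T` is an out-tree with root `r`: `r` is the only vertex of in-degree 0,
every other vertex has in-degree 1, and the underlying graph is a tree
(equivalently, under the degree conditions, every vertex is reachable from `r`). -/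
structure IsOutTree (T : DirGraph V) (r : V) : Prop where
  arcs_mem : ∀ a ∈ T.arcs, a.1 ∈ T.verts ∧ a.2 ∈ T.verts
  root_mem : r ∈ T.verts
  root_indeg : T.inDeg r = 0
  indeg_one : ∀ v ∈ T.verts, v ≠ r → T.inDeg v = 1
  reach_root : ∀ v ∈ T.verts, T.Reaches r v

/-- `T` is an out-tree of the digraph `D`, with root `r`. -/
def IsOutTreeOf (T D : DirGraph V) (r : V) : Prop :=
  T.IsOutTree r ∧ T.IsSubgraph D

/-- `T` is an out-branching (spanning out-tree) of `D`, with root `r`. -/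
def IsOutBranching (T D : DirGraph V) (r : V) : Prop :=
  T.IsOutTreeOf D r ∧ T.verts = D.verts

/-- `Leaf(T)`: the vertices of out-degree 0. -/
def leaves (T : DirGraph V) : Set V := {v ∈ T.verts | T.outDeg v = 0}

/-- `Branch(T)`: the vertices of out-degree at least 2. -/
def branchVerts (T : DirGraph V) : Set V := {v ∈ T.verts | 2 ≤ T.outDeg v}

/-- `BrSucc(T)`: the vertices whose in-neighbor in `T` is a branch vertex. -/
def brSucc (T : DirGraph V) : Set V := {v | ∃ u, (u, v) ∈ T.arcs ∧ 2 ≤ T.outDeg u}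

/-- `Head(B)`: the set of heads of the arcs in `B`. -/
def heads (B : Set (V × V)) : Set V := Prod.snd '' B

/-- `Back_D^T(z) = {(u,v) ∈ A(D) : v ≺_T z ⪯_T u}`. -/
def backArcs (D T : DirGraph V) (z : V) : Set (V × V) :=
  {a ∈ D.arcs | (T.Reaches a.2 z ∧ a.2 ≠ z) ∧ T.Reaches z a.1}

/-- The 1-change for `(u,v)`: add the arc `(u,v)` and delete the arc of `T`
with head `v`. -/
def oneChange (T : DirGraph V) (u v : V) : DirGraph V :=
  ⟨T.verts, {a ∈ T.arcs | a.2 ≠ v} ∪ {(u, v)}⟩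

/-- `ℓ(D)`: the maximum number of leaves over all out-trees of `D`. -/
noncomputable def ell (D : DirGraph V) : ℕ :=
  sSup {k | ∃ (T : DirGraph V) (r : V), IsOutTreeOf T D r ∧ (leaves T).ncard = k}

/-- `ℓ_s(D)`: the maximum number of leaves over all out-branchings of `D`. -/
noncomputable def ellS (D : DirGraph V) : ℕ :=
  sSup {k | ∃ (T : DirGraph V) (r : V), IsOutBranching T D r ∧ (leaves T).ncard = k}

/-- An arc is useless if no out-branching of `D` contains it. -/
def Useless (D : DirGraph V) (a : V × V) : Prop :=
  ∀ (T : DirGraph V) (r : V), IsOutBranching T D r → a ∉ T.arcs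

/-- `T` is a 1-optimal out-branching of `D`: no 1-change for an arc of
`A(D) \ A(T)` results in an out-branching with more leaves. -/
def IsOneOptimal (T D : DirGraph V) (r : V) : Prop :=
  IsOutBranching T D r ∧
    ∀ u v : V, (u, v) ∈ D.arcs → (u, v) ∉ T.arcs → v ≠ r →
      ∀ r' : V, IsOutBranching (oneChange T u v) D r' →
        (leaves (oneChange T u v)).ncard ≤ (leaves T).ncard

/-- `(X, U)` is a tree decomposition of the digraph `D`: `U` is a tree,
every vertex of `D` is in some bag, both endpoints of every arc are in a
common bag, and for every vertex the set of nodes whose bags contain it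
induces a subtree (a connected subgraph) of `U`. -/
structure IsTreeDecomp {ι : Type} (D : DirGraph V) (U : SimpleGraph ι) (X : ι → Set V) :
    Prop where
  tree : U.IsTree
  mem_bag : ∀ v ∈ D.verts, ∃ i, v ∈ X i
  arc_bag : ∀ a ∈ D.arcs, ∃ i, a.1 ∈ X i ∧ a.2 ∈ X i
  bag_connected : ∀ (v : V) (i j : ι), v ∈ X i → v ∈ X j →
    Relation.ReflTransGen (fun x y => U.Adj x y ∧ v ∈ X x ∧ v ∈ X y) i j

/-- The underlying undirected graph of `T`, on the vertex set of `T`. -/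
def underlying (T : DirGraph V) : SimpleGraph {v // v ∈ T.verts} :=
  SimpleGraph.fromRel fun a b => ((a : V), (b : V)) ∈ T.arcs

/-- The bag `X_v = {u, v} ∪ BrSucc(T) ∪ Leaf(T) ∪ Head(Back_D^T(v))`,
where `u` is the in-neighbor of `v` in `T` (omitted when `v` is the root). -/
def bag (D T : DirGraph V) (v : V) : Set V :=
  {u | (u, v) ∈ T.arcs} ∪ {v} ∪ brSucc T ∪ leaves T ∪ heads (backArcs D T v)

/-- The set of arcs of a dipath given as a list of vertices. -/
def listArcs (l : List V) : Set (V × V) := {a | a ∈ l.zip l.tail}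

end DirGraph

/-!
Let `T` be an out-tree of `D` with `ell D` leaves and root `x`, and let `r` be the root of an
out-branching. If `J` is the vertex set of an out-tree rooted at `r`, then `J` has at most `ellS D`
out-neighbours outside `J`: as long as some boundary vertex has an out-neighbour outside `J` and
its boundary, adding that vertex to `J` does not shrink the boundary, and once there is none, every
vertex outside `J` can be made a leaf of an out-branching. Taking for `J` a path `P` from `r`
to `x`, possibly together with the inner vertices of `T`, shows that the boundary of `P` and the set
of leaves of `T` off `P` have at most `ellS D` elements each.

For the leaves on `P`, choose `P` with as few of them as possible and then as short as possible. If
`x` reaches `r`, then `x` itself can replace `r` and `P = {x}`. Otherwise no vertex of `T` reaches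
`r`. A leaf of `T` has no outgoing arc in `T`, so `P` meets at most one leaf before it leaves `T`
along an arc outside `T`. When `P` next uses a vertex `v` of `T`, the arc `(u, v)` of `T` lies in an
out-branching, and since `v` does not reach `r` this makes `u` reachable from `r` without passing
through `v`. Thus some ear leaves `P` before `v` and returns to it at or after `v`; by the choice of
`P` it carries at least as many leaves as the part of `P` that it bypasses. Each leaf on `P`, up to
one, is therefore charged to a leaf of an ear or to the first vertex of an ear, which lies on the
boundary of `P`. So `P` contains at most `2 * ellS D + 1` leaves, and `ell D ≤ 3 * ellS D + 1`.
-/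

namespace DirGraph

open Relation Set

variable {V : Type}

section WeightedWalks

variable {R : V → V → Prop} {w : V → ℕ} {r u v : V} {m : ℕ}

/-- `HasWalk R w r v m`: some walk of the relation `R` from `r` to `v` has total vertex weight `m`,
where a vertex counts each time it is visited and both ends count. -/
inductive HasWalk (R : V → V → Prop) (w : V → ℕ) (r : V) : V → ℕ → Prop
  | nil : HasWalk R w r r (w r)
  | tail {u v : V} {m : ℕ} : HasWalk R w r u m → R u v → HasWalk R w r v (m + w v)

theorem HasWalk.reflTransGen (h : HasWalk R w r v m) : ReflTransGen R r v := by
  induction h with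
  | nil => exact .refl
  | tail _ huv ih => exact ih.tail huv

theorem HasWalk.weight_le (h : HasWalk R w r v m) : w v ≤ m := by
  cases h <;> omega

theorem exists_hasWalk (w : V → ℕ) (h : ReflTransGen R r v) : ∃ m, HasWalk R w r v m := by
  induction h with
  | refl => exact ⟨_, .nil⟩
  | tail _ huv ih => exact ih.elim fun _ hm => ⟨_, hm.tail huv⟩

/-- The vertex-weighted distance from `r`; it is `0` at the vertices that `r` does not reach. -/
noncomputable def weightDist (R : V → V → Prop) (w : V → ℕ) (r v : V) : ℕ :=
  sInf {m | HasWalk R w r v m}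

theorem HasWalk.weightDist_le (h : HasWalk R w r v m) : weightDist R w r v ≤ m :=
  Nat.sInf_le h

theorem hasWalk_weightDist (w : V → ℕ) (h : ReflTransGen R r v) :
    HasWalk R w r v (weightDist R w r v) :=
  Nat.sInf_mem (exists_hasWalk w h)

theorem weightDist_le_add (w : V → ℕ) (hu : ReflTransGen R r u) (huv : R u v) :
    weightDist R w r v ≤ weightDist R w r u + w v :=
  ((hasWalk_weightDist w hu).tail huv).weightDist_le

theorem weightDist_self : weightDist R w r r = w r :=
  le_antisymm HasWalk.nil.weightDist_le (hasWalk_weightDist w .refl).weight_le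

/-- The vertices `p 0, …, p n` form a minimum-weight walk of `R` from `p 0`: each step is an arc
that realises the weighted distance. Values of `p` beyond `n` are irrelevant. -/
structure IsGeodesic (R : V → V → Prop) (w : V → ℕ) (p : ℕ → V) (n : ℕ) : Prop where
  rel : ∀ i < n, R (p i) (p (i + 1))
  weightDist_succ : ∀ i < n,
    weightDist R w (p 0) (p (i + 1)) = weightDist R w (p 0) (p i) + w (p (i + 1))

theorem IsGeodesic.snoc {p : ℕ → V} {n : ℕ} (hp : IsGeodesic R w p n) (hv : R (p n) v)
    (hdist : weightDist R w (p 0) v = weightDist R w (p 0) (p n) + w v) :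
    IsGeodesic R w (Function.update p (n + 1) v) (n + 1) := by
  have update_of_le : ∀ i ≤ n, Function.update p (n + 1) v i = p i :=
    fun i hi => Function.update_of_ne (by omega) _ _
  have h0 := update_of_le 0 n.zero_le
  constructor <;> intro i hi <;> rcases Nat.lt_succ_iff_lt_or_eq.1 hi with hin | rfl
  · simpa only [update_of_le i hin.le, update_of_le _ hin] using hp.rel i hin
  · simpa only [update_of_le i le_rfl, Function.update_self] using hv
  · simpa only [h0, update_of_le i hin.le, update_of_le _ hin] using hp.weightDist_succ i hin
  · simpa only [h0, update_of_le i le_rfl, Function.update_self] using hdist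

theorem HasWalk.exists_isGeodesic (h : HasWalk R w r v m) (hm : m ≤ weightDist R w r v) :
    ∃ (n : ℕ) (p : ℕ → V), p 0 = r ∧ p n = v ∧ IsGeodesic R w p n := by
  induction h with
  | nil => exact ⟨0, fun _ => r, rfl, rfl, by simp, by simp⟩
  | @tail u v m hu huv ih =>
    have hle := weightDist_le_add w hu.reflTransGen huv
    have hmin := hu.weightDist_le
    obtain ⟨n, p, rfl, rfl, hp⟩ := ih (by omega)
    exact ⟨n + 1, Function.update p (n + 1) v, Function.update_of_ne (by simp) _ _,
      Function.update_self _ _ _, hp.snoc huv (by omega)⟩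

theorem exists_isGeodesic (w : V → ℕ) (h : ReflTransGen R r v) :
    ∃ (n : ℕ) (p : ℕ → V), p 0 = r ∧ p n = v ∧ IsGeodesic R w p n :=
  (hasWalk_weightDist w h).exists_isGeodesic le_rfl

theorem exists_rel_weightDist_eq_add (w : V → ℕ) (h : ReflTransGen R r v) (hv : v ≠ r) :
    ∃ u, R u v ∧ weightDist R w r v = weightDist R w r u + w v := by
  obtain ⟨_ | n, p, rfl, rfl, hp⟩ := exists_isGeodesic w h
  · exact absurd rfl hv
  · exact ⟨p n, hp.rel n n.lt_succ_self, hp.weightDist_succ n n.lt_succ_self⟩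

theorem IsGeodesic.weightDist_eq_sum {p : ℕ → V} {n i : ℕ} (hp : IsGeodesic R w p n)
    (hi : i ≤ n) : weightDist R w (p 0) (p i) = ∑ j ∈ Finset.range (i + 1), w (p j) := by
  induction i with
  | zero => simp [weightDist_self]
  | succ i ih => rw [hp.weightDist_succ i hi, ih (by omega), Finset.sum_range_succ _ (i + 1)]

/-- Summing `w` over a set of vertices, and not along the walk, avoids paying twice for a vertex
that the walk repeats. -/
theorem exists_finset_between {d : V → ℕ}
    (hd : ∀ a b, ReflTransGen R u a → R a b → d b ≤ d a + w b) (h : ReflTransGen R u v) :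
    ∃ E : Finset V, v ∈ E ∧ (∀ e ∈ E, ReflTransGen R u e ∧ ReflTransGen R e v) ∧
      ∀ e ∈ E, d e + w u ≤ d u + ∑ i ∈ E, w i := by
  classical
  induction h with
  | refl => exact ⟨{u}, by simp, by simp [ReflTransGen.refl], by simp⟩
  | @tail b c hub hbc ih =>
    obtain ⟨E, hbE, hbetween, hbound⟩ := ih
    by_cases hcE : c ∈ E
    · exact ⟨E, hcE, fun e he => ⟨(hbetween e he).1, (hbetween e he).2.tail hbc⟩, hbound⟩
    · refine ⟨insert c E, by simp, ?_, ?_⟩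
      · rw [Finset.forall_mem_insert]
        exact ⟨⟨hub.tail hbc, .refl⟩, fun e he => ⟨(hbetween e he).1, (hbetween e he).2.tail hbc⟩⟩
      · rw [Finset.forall_mem_insert, Finset.sum_insert hcE]
        have hdc := hd b c hub hbc
        have hdb := hbound b hbE
        exact ⟨by omega, fun e he => (hbound e he).trans (by omega)⟩

end WeightedWalks

section Reachability

variable {D D' : DirGraph V} {J J' : Set V} {r u v : V}

/-- The arcs of `D` with tail in `J`, as a relation. -/
def ArcFrom (D : DirGraph V) (J : Set V) (u v : V) : Prop := u ∈ J ∧ (u, v) ∈ D.arcs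

/-- Some walk of `D` leads from `u` to `v` with every vertex except possibly the last in `J`. The
last vertex is exempt so that a walk may end on the boundary of `J`; plain reachability is the case
`J = Set.univ`. -/
def ReachesThrough (D : DirGraph V) (J : Set V) : V → V → Prop := ReflTransGen (D.ArcFrom J)

theorem ReachesThrough.mono (hJ : J ⊆ J') (h : D.ReachesThrough J u v) :
    D.ReachesThrough J' u v :=
  ReflTransGen.mono (fun _ _ huv => ⟨hJ huv.1, huv.2⟩) _ _ h

theorem ReachesThrough.of_arcs_subset (hD : D.arcs ⊆ D'.arcs) (h : D.ReachesThrough J u v) :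
    D'.ReachesThrough J u v :=
  ReflTransGen.mono (fun _ _ huv => ⟨huv.1, hD huv.2⟩) _ _ h

theorem ReachesThrough.mem (h : D.ReachesThrough J u v) (hv : v ∈ J) : u ∈ J := by
  obtain rfl | ⟨_, huw, -⟩ := h.cases_head
  exacts [hv, huw.1]

theorem ReachesThrough.exists_arc (h : D.ReachesThrough J u v) (hu : u ∈ J') (hv : v ∉ J') :
    ∃ a ∈ J', ∃ b ∉ J', D.ArcFrom J a b := by
  by_contra! hclosed
  refine hv ?_
  clear hv
  induction h with
  | refl => exact hu
  | tail _ hab ih => exact by_contra fun hb => hclosed _ ih _ hb hab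

theorem ReachesThrough.sdiff_singleton (x : V) (h : D.ReachesThrough J u v) :
    D.ReachesThrough (J \ {x}) u v ∨
      D.ReachesThrough (J \ {x}) u x ∧ D.ReachesThrough J x v := by
  induction h with
  | refl => exact .inl .refl
  | @tail b c _ hbc ih =>
    rcases ih with hub | ⟨hux, hxb⟩
    · obtain rfl | hbx := eq_or_ne b x
      · exact .inr ⟨hub, .single hbc⟩
      · exact .inl (hub.tail ⟨⟨hbc.1, hbx⟩, hbc.2⟩)
    · exact .inr ⟨hux, hxb.tail hbc⟩

theorem Reaches.reachesThrough (h : D.Reaches u v) : D.ReachesThrough univ u v := by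
  obtain ⟨l, ⟨hne, -, -, hchain⟩, hhead, hlast⟩ := h
  rw [List.head?_eq_some_head hne, Option.some_inj] at hhead
  rw [List.getLast?_eq_some_getLast hne, Option.some_inj] at hlast
  have hreach := List.relationReflTransGen_of_exists_isChain l hchain hne
  rw [hhead, hlast] at hreach
  exact ReflTransGen.mono (fun _ _ hab => ⟨mem_univ _, hab⟩) _ _ hreach

theorem IsDipath.of_prefix {l l' : List V} (hl : D.IsDipath l) (hl' : l' <+: l) (hne : l' ≠ []) :
    D.IsDipath l' :=
  ⟨hne, hl.2.1.sublist hl'.sublist, fun v hv => hl.2.2.1 v (hl'.subset hv), hl.2.2.2.prefix hl'⟩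

theorem Reaches.tail (h : D.Reaches r u) (huv : (u, v) ∈ D.arcs) (hv : v ∈ D.verts) :
    D.Reaches r v := by
  obtain ⟨l, hl, hhead, hlast⟩ := h
  by_cases hvl : v ∈ l
  · obtain ⟨s, t, rfl⟩ := List.append_of_mem hvl
    refine ⟨s ++ [v], hl.of_prefix ⟨t, by simp⟩ (by simp), ?_, by simp⟩
    cases s <;> simpa using hhead
  · refine ⟨l ++ [v], ⟨by simp, ?_, ?_, ?_⟩, by simp [hhead], by simp⟩
    · simpa using hl.2.1.concat hvl
    · simpa [or_imp, forall_and, hv] using hl.2.2.1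
    · exact hl.2.2.2.append (List.isChain_singleton v) (by simp [hlast, huv])

end Reachability

section OutTrees

variable {D T : DirGraph V} {r x u u' v : V}

theorem WellFormed.head_mem (hD : D.WellFormed) (huv : (u, v) ∈ D.arcs) : v ∈ D.verts :=
  (hD _ huv).2.1

theorem WellFormed.ne (hD : D.WellFormed) (huv : (u, v) ∈ D.arcs) : u ≠ v :=
  (hD _ huv).2.2

theorem IsOutTree.exists_arc (hT : T.IsOutTree r) (hv : v ∈ T.verts) (hvr : v ≠ r) :
    ∃ u, (u, v) ∈ T.arcs := by
  obtain ⟨⟨u, v'⟩, harcs⟩ := ncard_eq_one.1 (hT.indeg_one v hv hvr)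
  obtain ⟨huv, rfl⟩ : (u, v') ∈ {a ∈ T.arcs | a.2 = v} := harcs ▸ mem_singleton _
  exact ⟨u, huv⟩

theorem IsOutTree.tail_unique (hT : T.IsOutTree r) (hvr : v ≠ r) (huv : (u, v) ∈ T.arcs)
    (huv' : (u', v) ∈ T.arcs) : u = u' := by
  obtain ⟨a, harcs⟩ := ncard_eq_one.1 (hT.indeg_one v (hT.arcs_mem _ huv).2 hvr)
  have hu : (u, v) ∈ {a ∈ T.arcs | a.2 = v} := ⟨huv, rfl⟩
  have hu' : (u', v) ∈ {a ∈ T.arcs | a.2 = v} := ⟨huv', rfl⟩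
  rw [harcs, mem_singleton_iff] at hu hu'
  exact congrArg Prod.fst (hu.trans hu'.symm)

theorem IsOutTree.ne_root_of_arc [Finite V] (hT : T.IsOutTree r) (huv : (u, v) ∈ T.arcs) :
    v ≠ r := by
  rintro rfl
  have harcs : {a ∈ T.arcs | a.2 = v} = ∅ := (ncard_eq_zero).1 hT.root_indeg
  exact harcs.subset ⟨huv, rfl⟩

theorem notMem_arcs_of_mem_leaves [Finite V] (hv : v ∈ T.leaves) (u : V) : (v, u) ∉ T.arcs := by
  intro hvu
  have harcs : {a ∈ T.arcs | a.1 = v} = ∅ := (ncard_eq_zero).1 hv.2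
  exact harcs.subset ⟨hvu, rfl⟩

theorem mem_leaves_of_forall_notMem_arcs (hv : v ∈ T.verts) (h : ∀ u, (v, u) ∉ T.arcs) :
    v ∈ T.leaves := by
  have harcs : {a ∈ T.arcs | a.1 = v} = ∅ :=
    eq_empty_of_forall_notMem fun ⟨_, b⟩ ⟨hab, hav⟩ => h b (hav ▸ hab)
  exact ⟨hv, by rw [outDeg, harcs, ncard_empty]⟩

theorem IsOutTreeOf.reachesThrough_verts_sdiff_leaves [Finite V] (hT : T.IsOutTreeOf D x)
    (hv : v ∈ T.verts) : D.ReachesThrough (T.verts \ T.leaves) x v := by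
  refine ReflTransGen.mono ?_ _ _ (hT.1.reach_root v hv).reachesThrough
  exact fun a b hab => ⟨⟨(hT.1.arcs_mem _ hab.2).1,
    fun ha => notMem_arcs_of_mem_leaves ha b hab.2⟩, hT.2.2 hab.2⟩

theorem bddAbove_ncard_leaves [Finite V] (Q : DirGraph V → V → Prop) :
    BddAbove {k | ∃ T r, Q T r ∧ (leaves T).ncard = k} :=
  ⟨Nat.card V, by rintro _ ⟨T, _, _, rfl⟩; exact ncard_le_card _⟩

theorem IsOutBranching.ncard_leaves_le_ellS [Finite V] (hT : T.IsOutBranching D r) :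
    T.leaves.ncard ≤ ellS D :=
  le_csSup (bddAbove_ncard_leaves _) ⟨T, r, hT, rfl⟩

theorem IsOutTreeOf.exists_ncard_leaves_eq_ell [Finite V] (hT : T.IsOutTreeOf D r) :
    ∃ T' x, IsOutTreeOf T' D x ∧ (leaves T').ncard = ell D :=
  Nat.sSup_mem (s := {k | ∃ T' x, IsOutTreeOf T' D x ∧ (leaves T').ncard = k})
    ⟨_, T, r, hT, rfl⟩ (bddAbove_ncard_leaves _)

/-- The digraph on `W` in which each vertex other than `r` receives exactly one arc, from its
parent. -/
def ofParent (W : Set V) (r : V) (parent : V → V) : DirGraph V where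
  verts := W
  arcs := (fun v => (parent v, v)) '' (W \ {r})

theorem isOutTree_ofParent {W : Set V} {parent : V → V} (hr : r ∈ W) (depth : V → ℕ)
    (hparent : ∀ v ∈ W, v ≠ r → parent v ∈ W ∧ depth (parent v) < depth v) :
    (ofParent W r parent).IsOutTree r where
  arcs_mem := by
    rintro _ ⟨v, ⟨hv, hvr⟩, rfl⟩
    exact ⟨(hparent v hv hvr).1, hv⟩
  root_mem := hr
  root_indeg := by
    have harcs : {a ∈ (ofParent W r parent).arcs | a.2 = r} = ∅ :=
      eq_empty_of_forall_notMem (by rintro _ ⟨⟨v, ⟨-, hvr⟩, rfl⟩, hv⟩; exact hvr hv)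
    rw [inDeg, harcs, ncard_empty]
  indeg_one v hv hvr := by
    refine ncard_eq_one.2 ⟨(parent v, v), ?_⟩
    refine eq_singleton_iff_unique_mem.2 ⟨⟨⟨v, ⟨hv, hvr⟩, rfl⟩, rfl⟩, ?_⟩
    rintro _ ⟨⟨u, -, rfl⟩, rfl⟩
    rfl
  reach_root v hv := by
    induction hk : depth v using Nat.strong_induction_on generalizing v with
    | _ k ih =>
      obtain rfl | hvr := eq_or_ne v r
      · exact ⟨[v], ⟨by simp, by simp, by simpa using hv, List.isChain_singleton v⟩, rfl, rfl⟩
      · obtain ⟨hmem, hlt⟩ := hparent v hv hvr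
        exact (ih _ (hk ▸ hlt) _ hmem rfl).tail ⟨v, ⟨hv, hvr⟩, rfl⟩ hv

theorem ncard_verts_sdiff_le_ellS [Finite V] {J : Set V} (hD : D.WellFormed) (hr : r ∈ D.verts)
    (hspan : ∀ v ∈ D.verts, D.ReachesThrough J r v) : (D.verts \ J).ncard ≤ ellS D := by
  have hexists : ∀ v ∈ D.verts, v ≠ r → ∃ u, D.ArcFrom J u v ∧
      weightDist (D.ArcFrom J) 1 r v = weightDist (D.ArcFrom J) 1 r u + 1 :=
    fun v hv hvr => exists_rel_weightDist_eq_add 1 (hspan v hv) hvr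
  have : Nonempty V := ⟨r⟩
  choose! parent harc hdist using hexists
  have htree : (ofParent D.verts r parent).IsOutTree r :=
    isOutTree_ofParent hr (weightDist (D.ArcFrom J) 1 r) fun v hv hvr =>
      ⟨(hD _ (harc v hv hvr).2).1, by have := hdist v hv hvr; omega⟩
  have hsub : (ofParent D.verts r parent).IsSubgraph D :=
    ⟨subset_rfl, by rintro _ ⟨v, ⟨hv, hvr⟩, rfl⟩; exact (harc v hv hvr).2⟩
  have hleaves : D.verts \ J ⊆ (ofParent D.verts r parent).leaves := by
    refine fun v hv => mem_leaves_of_forall_notMem_arcs hv.1 ?_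
    rintro _ ⟨u, ⟨hu, hur⟩, h⟩
    obtain ⟨rfl, rfl⟩ := Prod.mk.inj h
    exact hv.2 (harc u hu hur).1
  exact (ncard_le_ncard hleaves).trans
    (IsOutBranching.ncard_leaves_le_ellS ⟨⟨htree, hsub⟩, rfl⟩)

end OutTrees

section Extension

variable {D T : DirGraph V} {J : Set V} {r s x : V}

/-- The out-neighbours of `J` outside `J`. -/
def outBoundary (D : DirGraph V) (J : Set V) : Set V := {v | v ∉ J ∧ ∃ u ∈ J, (u, v) ∈ D.arcs}

/-- `J` is the vertex set of an out-tree of `D` rooted at `r`, stated through reachability so that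
no tree has to be carried along. -/
structure IsOutConnected (D : DirGraph V) (r : V) (J : Set V) : Prop where
  root_mem : r ∈ J
  reachesThrough : ∀ v ∈ J, D.ReachesThrough J r v

theorem isOutConnected_singleton (D : DirGraph V) (r : V) : D.IsOutConnected r {r} :=
  ⟨rfl, by rintro v rfl; exact .refl⟩

theorem IsOutConnected.reachesThrough_of_mem_outBoundary (hJ : D.IsOutConnected r J)
    (hs : s ∈ D.outBoundary J) : D.ReachesThrough J r s := by
  obtain ⟨-, u, hu, hus⟩ := hs
  exact (hJ.reachesThrough u hu).tail ⟨hu, hus⟩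

theorem IsOutConnected.insert (hJ : D.IsOutConnected r J) (hs : s ∈ D.outBoundary J) :
    D.IsOutConnected r (insert s J) where
  root_mem := mem_insert_of_mem s hJ.root_mem
  reachesThrough := by
    rintro v (rfl | hv)
    · exact (hJ.reachesThrough_of_mem_outBoundary hs).mono (subset_insert _ _)
    · exact (hJ.reachesThrough v hv).mono (subset_insert _ _)

theorem IsOutConnected.exists_arc_leaving (hJ : D.IsOutConnected r J)
    (hreach : ∀ v ∈ D.verts, D.ReachesThrough univ r v)
    (hspan : ¬ ∀ v ∈ D.verts, D.ReachesThrough J r v) :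
    ∃ s ∈ D.outBoundary J, ∃ w, w ∉ J ∧ w ∉ D.outBoundary J ∧ (s, w) ∈ D.arcs := by
  push Not at hspan
  obtain ⟨v, hv, hrv⟩ := hspan
  obtain ⟨s, hs, w, hw, -, hsw⟩ :=
    (hreach v hv).exists_arc (J' := {y | D.ReachesThrough J r y}) .refl hrv
  have hsJ : s ∉ J := fun hsJ => hw (hs.tail ⟨hsJ, hsw⟩)
  refine ⟨s, ⟨hsJ, ?_⟩, w, fun hwJ => hw (hJ.reachesThrough w hwJ),
    fun hwJ => hw (hJ.reachesThrough_of_mem_outBoundary hwJ), hsw⟩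
  obtain rfl | ⟨u, -, hus⟩ := hs.cases_tail
  exacts [absurd hJ.root_mem hsJ, ⟨u, hus⟩]

theorem ncard_outBoundary_le_ncard_outBoundary_insert [Finite V] {w : V}
    (hs : s ∈ D.outBoundary J) (hsw : (s, w) ∈ D.arcs) (hwJ : w ∉ J) (hw : w ∉ D.outBoundary J) :
    (D.outBoundary J).ncard ≤ (D.outBoundary (insert s J)).ncard := by
  rw [← ncard_exchange hw hs]
  refine ncard_le_ncard ?_
  rintro v (rfl | ⟨⟨hvJ, u, hu, huv⟩, hvs⟩)
  · exact ⟨by rintro (rfl | h) <;> contradiction, s, mem_insert _ _, hsw⟩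
  · exact ⟨by rintro (rfl | h) <;> contradiction, u, mem_insert_of_mem _ hu, huv⟩

theorem IsOutConnected.ncard_outBoundary_le_ellS [Finite V] (hD : D.WellFormed)
    (hr : r ∈ D.verts) (hreach : ∀ v ∈ D.verts, D.ReachesThrough univ r v)
    (hJ : D.IsOutConnected r J) : (D.outBoundary J).ncard ≤ ellS D := by
  induction J using WellFoundedGT.induction with
  | _ J ih =>
    by_cases hspan : ∀ v ∈ D.verts, D.ReachesThrough J r v
    · refine (ncard_le_ncard ?_).trans (ncard_verts_sdiff_le_ellS hD hr hspan)
      rintro v ⟨hvJ, u, -, huv⟩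
      exact ⟨hD.head_mem huv, hvJ⟩
    · obtain ⟨s, hs, w, hwJ, hw, hsw⟩ := hJ.exists_arc_leaving hreach hspan
      exact (ncard_outBoundary_le_ncard_outBoundary_insert hs hsw hwJ hw).trans
        (ih _ (ssubset_insert hs.1) (hJ.insert hs))

theorem IsOutTreeOf.ncard_leaves_sdiff_le_ellS [Finite V] (hT : T.IsOutTreeOf D x)
    (hD : D.WellFormed) (hr : r ∈ D.verts)
    (hreach : ∀ v ∈ D.verts, D.ReachesThrough univ r v)
    (hJ : D.IsOutConnected r J) (hx : x ∈ J) : (T.leaves \ J).ncard ≤ ellS D := by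
  have hconn : D.IsOutConnected r (J ∪ T.verts \ T.leaves) := by
    refine ⟨.inl hJ.root_mem, ?_⟩
    rintro v (hv | hv)
    · exact (hJ.reachesThrough v hv).mono subset_union_left
    · exact ((hJ.reachesThrough x hx).mono subset_union_left).trans
        ((hT.reachesThrough_verts_sdiff_leaves hv.1).mono subset_union_right)
  refine (ncard_le_ncard ?_).trans (hconn.ncard_outBoundary_le_ellS hD hr hreach)
  rintro s ⟨hs, hsJ⟩
  obtain ⟨u, hus⟩ := hT.1.exists_arc hs.1 (ne_of_mem_of_not_mem hx hsJ).symm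
  have hu : u ∈ T.verts \ T.leaves :=
    ⟨(hT.1.arcs_mem _ hus).1, fun hu => notMem_arcs_of_mem_leaves hu s hus⟩
  exact ⟨by rintro (h | h); exacts [hsJ h, h.2 hs], u, .inr hu, hT.2.2 hus⟩

end Extension

section UselessArcs

variable {D : DirGraph V} {r u v : V}

theorem reachesThrough_sdiff_head_of_not_useless [Finite V] (hr : r ∈ D.verts)
    (hreach : ∀ x ∈ D.verts, D.ReachesThrough univ r x) (huv : ¬ D.Useless (u, v))
    (hvr : ¬ D.ReachesThrough univ v r) : D.ReachesThrough (univ \ {v}) r u := by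
  simp only [Useless, not_forall, not_not] at huv
  obtain ⟨B, r', ⟨⟨hB, hBD⟩, hspan⟩, huvB⟩ := huv
  have hr'v := (hB.reach_root v (hB.arcs_mem _ huvB).2).reachesThrough
  have hr'u : D.ReachesThrough (univ \ {v}) r' u := by
    have havoid : B.ReachesThrough (univ \ {v}) r' v :=
      (hr'v.sdiff_singleton v).elim id And.left
    obtain hroot | ⟨u', hu', -, huv'⟩ := havoid.cases_tail
    · exact absurd hroot (hB.ne_root_of_arc huvB)
    · rw [hB.tail_unique (hB.ne_root_of_arc huvB) huvB huv']
      exact ReachesThrough.of_arcs_subset hBD.2 hu'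
  obtain hrr' | ⟨-, hvr'⟩ := (hreach r' (hBD.1 hB.root_mem)).sdiff_singleton v
  · exact hrr'.trans hr'u
  · have hr'r := (hB.reach_root r (hspan ▸ hr)).reachesThrough.of_arcs_subset hBD.2
    exact absurd (hvr'.trans hr'r) hvr

end UselessArcs

section Ears

variable {D : DirGraph V} {L : Set V} {p : ℕ → V} {n : ℕ}

/-- A vertex weight that ranks paths first by their number of vertices in `L` and then by their
length: a single vertex of `L` outweighs any set of vertices outside `L`. -/
noncomputable def lexWeight (L : Set V) (v : V) : ℕ := 1 + (Nat.card V + 1) * L.indicator 1 v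

/-- The number of indices `i < m` with `p i ∈ L`. -/
noncomputable def visits (L : Set V) (p : ℕ → V) (m : ℕ) : ℕ :=
  ∑ i ∈ Finset.range m, L.indicator 1 (p i)

theorem visits_succ (L : Set V) (p : ℕ → V) (m : ℕ) :
    visits L p (m + 1) = visits L p m + L.indicator 1 (p m) :=
  Finset.sum_range_succ _ m

theorem visits_succ_of_notMem {m : ℕ} (h : p m ∉ L) : visits L p (m + 1) = visits L p m := by
  rw [visits_succ, indicator_of_notMem h, add_zero]

theorem visits_succ_le (L : Set V) (p : ℕ → V) (m : ℕ) :
    visits L p (m + 1) ≤ visits L p m + 1 := by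
  rw [visits_succ]
  exact Nat.add_le_add_left (indicator_le_self' (by simp) _) _

theorem visits_mono (L : Set V) (p : ℕ → V) : Monotone (visits L p) :=
  monotone_nat_of_le_succ fun m => (visits_succ L p m).symm ▸ Nat.le_add_right _ _

theorem ncard_inter_image_Iic_le_visits (L : Set V) (p : ℕ → V) (n : ℕ) :
    (L ∩ p '' Iic n).ncard ≤ visits L p (n + 1) := by
  classical
  have himage : L ∩ p '' Iic n = p '' ({i ∈ Finset.range (n + 1) | p i ∈ L} : Finset ℕ) := by
    ext v
    simp only [mem_inter_iff, mem_image, mem_Iic, Finset.mem_coe, Finset.mem_filter,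
      Finset.mem_range, Nat.lt_succ_iff]
    constructor
    · rintro ⟨hv, i, hi, rfl⟩
      exact ⟨i, ⟨hi, hv⟩, rfl⟩
    · rintro ⟨i, ⟨hi, hv⟩, rfl⟩
      exact ⟨hv, i, hi, rfl⟩
  rw [himage]
  refine (ncard_image_le (Finset.finite_toSet _)).trans_eq ?_
  rw [ncard_coe_finset]
  simp [visits, indicator_apply]

theorem sum_lexWeight (L : Set V) (E : Finset V) :
    ∑ v ∈ E, lexWeight L v = E.card + (Nat.card V + 1) * (L ∩ E).ncard := by
  classical
  have hcard : (L ∩ E).ncard = ∑ v ∈ E, L.indicator 1 v := by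
    have hfilter : L ∩ E = ({v ∈ E | v ∈ L} : Finset V) := by ext; simp [and_comm]
    rw [hfilter, ncard_coe_finset]
    simp [indicator_apply]
  simp only [lexWeight, Finset.sum_add_distrib, Finset.sum_const, smul_eq_mul, mul_one, hcard,
    Finset.mul_sum]

theorem IsGeodesic.weightDist_lexWeight_eq {R : V → V → Prop} {i : ℕ}
    (hp : IsGeodesic R (lexWeight L) p n) (hi : i ≤ n) :
    weightDist R (lexWeight L) (p 0) (p i) = (i + 1) + (Nat.card V + 1) * visits L p (i + 1) := by
  simp [hp.weightDist_eq_sum hi, lexWeight, visits, Finset.sum_add_distrib, Finset.mul_sum]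

theorem IsGeodesic.injOn {R : V → V → Prop} (hp : IsGeodesic R (lexWeight L) p n) :
    InjOn p (Iic n) := by
  have hmono : StrictMonoOn (fun i => weightDist R (lexWeight L) (p 0) (p i)) (Iic n) := by
    intro i hi j hj hij
    simp only [hp.weightDist_lexWeight_eq hi, hp.weightDist_lexWeight_eq hj]
    exact add_lt_add_of_lt_of_le (Nat.succ_lt_succ hij)
      (Nat.mul_le_mul_left _ (visits_mono L p (Nat.succ_le_succ hij.le)))
  exact fun i hi j hj hij => hmono.injOn hi hj (by simp only [hij])

/-- The geodesic is compared with the detour that leaves it at `p b`, collects the weight `x` and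
returns to it at `p c`. -/
theorem IsGeodesic.add_visits_le {R : V → V → Prop} {b c x : ℕ}
    (hp : IsGeodesic R (lexWeight L) p n) (hb : b ≤ n) (hc : c ≤ n)
    (hle : weightDist R (lexWeight L) (p 0) (p c) ≤
      weightDist R (lexWeight L) (p 0) (p b) + x + lexWeight L (p c)) :
    c + (Nat.card V + 1) * visits L p c ≤ b + 1 + (Nat.card V + 1) * visits L p (b + 1) + x := by
  rw [hp.weightDist_lexWeight_eq hb, hp.weightDist_lexWeight_eq hc, visits_succ L p c, mul_add,
    lexWeight] at hle
  omega

/-- The vertices off the path `p 0, …, p n` that have a walk, avoiding the path until its last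
vertex, to some `p c` with `t ≤ c ≤ n`. -/
def feeders (D : DirGraph V) (p : ℕ → V) (n t : ℕ) : Set V :=
  {q | q ∉ p '' Iic n ∧ ∃ c ∈ Icc t n, D.ReachesThrough (p '' Iic n)ᶜ q (p c)}

theorem feeders_anti (D : DirGraph V) (p : ℕ → V) (n : ℕ) : Antitone (D.feeders p n) :=
  fun _ _ hst _ hq => ⟨hq.1, hq.2.imp fun _ hc => ⟨⟨hst.trans hc.1.1, hc.1.2⟩, hc.2⟩⟩

theorem mem_feeders_of_reachesThrough {e q : V} {t : ℕ} (hq : q ∈ D.feeders p n t)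
    (heq : D.ReachesThrough (p '' Iic n)ᶜ e q) : e ∈ D.feeders p n t := by
  obtain ⟨hqp, c, hc, hqc⟩ := hq
  exact ⟨heq.mem hqp, c, hc, heq.trans hqc⟩

theorem mem_feeders_of_mem_arcs {a b : V} {t : ℕ} (ha : a ∉ p '' Iic n) (hab : (a, b) ∈ D.arcs)
    (hb : b ∈ D.feeders p n t ∪ p '' Icc t n) : a ∈ D.feeders p n t := by
  obtain hb | ⟨i, hi, rfl⟩ := hb
  · exact mem_feeders_of_reachesThrough hb (.single ⟨ha, hab⟩)
  · exact ⟨ha, i, hi, .single ⟨ha, hab⟩⟩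

theorem exists_reachesThrough_notMem_feeders {q : V} {t : ℕ} (hq : q ∈ D.feeders p n t) :
    ∃ c ∈ Icc t n, D.ReachesThrough (p '' Iic n)ᶜ q (p c) ∧ q ∉ D.feeders p n (c + 1) := by
  obtain ⟨-, hne⟩ := hq
  have hbdd : BddAbove {c | c ∈ Icc t n ∧ D.ReachesThrough (p '' Iic n)ᶜ q (p c)} :=
    ⟨n, fun _ hc => hc.1.2⟩
  obtain ⟨hc, hqc⟩ := Nat.sSup_mem hne hbdd
  refine ⟨_, hc, hqc, ?_⟩
  rintro ⟨-, c', hc', hqc'⟩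
  have hle := le_csSup hbdd ⟨⟨hc.1.trans (Nat.le_of_succ_le hc'.1), hc'.2⟩, hqc'⟩
  exact absurd hc'.1 (not_le.2 (Nat.lt_succ_of_le hle))

theorem IsGeodesic.reachesThrough {i : ℕ} {w : V → ℕ} (hp : IsGeodesic (D.ArcFrom univ) w p n)
    (hi : i ≤ n) : D.ReachesThrough (p '' Iic n) (p 0) (p i) := by
  induction i with
  | zero => exact .refl
  | succ i ih =>
    exact (ih (by omega)).tail ⟨⟨i, (by omega : i ≤ n), rfl⟩, (hp.rel i hi).2⟩

theorem IsGeodesic.le_succ_of_mem_arcs {b c : ℕ}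
    (hp : IsGeodesic (D.ArcFrom univ) (lexWeight L) p n) (hb : b ≤ n) (hc : c ≤ n)
    (hbc : (p b, p c) ∈ D.arcs) : c ≤ b + 1 := by
  by_contra! hlt
  have hcompare := hp.add_visits_le (x := 0) hb hc
    (weightDist_le_add _ ((hp.reachesThrough hb).mono (subset_univ _)) ⟨mem_univ _, hbc⟩)
  have hvisits := Nat.mul_le_mul_left (Nat.card V + 1) (visits_mono L p hlt.le)
  omega

theorem IsGeodesic.isOutConnected {w : V → ℕ} (hp : IsGeodesic (D.ArcFrom univ) w p n) :
    D.IsOutConnected (p 0) (p '' Iic n) where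
  root_mem := ⟨0, n.zero_le, rfl⟩
  reachesThrough := by
    rintro _ ⟨i, hi, rfl⟩
    exact hp.reachesThrough hi

theorem IsGeodesic.exists_arc_mem_feeders {t : ℕ} {u : V}
    (hp : IsGeodesic (D.ArcFrom univ) (lexWeight L) p n) (ht : t + 1 ≤ n)
    (hu : (u, p (t + 1)) ∈ D.arcs) (hut : u ≠ p t) (hut' : u ≠ p (t + 1))
    (hreach : D.ReachesThrough (univ \ {p (t + 1)}) (p 0) u) :
    ∃ b ≤ t, ∃ q ∈ D.feeders p n (t + 1), (p b, q) ∈ D.arcs := by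
  have hback : ∀ a, a ∉ D.feeders p n (t + 1) ∪ p '' Icc (t + 2) n → a ≠ p (t + 1) →
      a ∈ p '' Iic n → ∃ b ≤ t, p b = a := by
    rintro _ ha hat ⟨b, hb, rfl⟩
    refine ⟨b, not_lt.1 fun hbt => ?_, rfl⟩
    obtain rfl | hbt := eq_or_lt_of_le (Nat.succ_le_of_lt hbt)
    exacts [hat rfl, ha (.inr ⟨b, ⟨hbt, hb⟩, rfl⟩)]
  have hu_late : u ∈ D.feeders p n (t + 1) ∪ p '' Icc (t + 2) n := by
    by_contra hu_early
    by_cases hup : u ∈ p '' Iic n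
    · obtain ⟨b, hb, rfl⟩ := hback u hu_early hut' hup
      have hno_shortcut := hp.le_succ_of_mem_arcs (by omega) ht hu
      exact hut (by rw [show b = t by omega])
    · exact hu_early (.inl (mem_feeders_of_mem_arcs hup hu (.inr ⟨t + 1, ⟨le_rfl, ht⟩, rfl⟩)))
  have h0_early : p 0 ∉ D.feeders p n (t + 1) ∪ p '' Icc (t + 2) n := by
    rintro (h | ⟨i, hi, hi0⟩)
    · exact h.1 ⟨0, n.zero_le, rfl⟩
    · obtain rfl : i = 0 := hp.injOn hi.2 n.zero_le hi0
      exact absurd hi.1 (by omega)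
  obtain ⟨a, ha, b, hb, ⟨-, hat⟩, hab⟩ :=
    hreach.exists_arc (J' := (D.feeders p n (t + 1) ∪ p '' Icc (t + 2) n)ᶜ) h0_early
      (not_not.2 hu_late)
  rw [notMem_compl_iff] at hb
  have hap : a ∈ p '' Iic n := by_contra fun hap => ha <| .inl <| mem_feeders_of_mem_arcs hap hab <|
    hb.imp_right fun hb => image_mono (Icc_subset_Icc_left (Nat.le_succ _)) hb
  obtain ⟨i, hi, rfl⟩ := hback a ha hat hap
  refine ⟨i, hi, b, ?_, hab⟩
  obtain hb | ⟨j, hj, rfl⟩ := hb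
  · exact hb
  · have hno_shortcut := hp.le_succ_of_mem_arcs (by omega) hj.2 hab
    exact absurd hj.1 (by omega)

theorem IsGeodesic.exists_finset_weightDist_le {b c : ℕ} {q : V} {w : V → ℕ}
    (hp : IsGeodesic (D.ArcFrom univ) w p n) (hb : b ≤ n) (hc : c ≤ n)
    (hbq : (p b, q) ∈ D.arcs) (hqp : q ∉ p '' Iic n)
    (hqc : D.ReachesThrough (p '' Iic n)ᶜ q (p c)) :
    ∃ E : Finset V, (∀ e ∈ E, e ∉ p '' Iic n ∧ D.ReachesThrough (p '' Iic n)ᶜ q e ∧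
      D.ReachesThrough (p '' Iic n)ᶜ e (p c)) ∧
      weightDist (D.ArcFrom univ) w (p 0) (p c) ≤
        weightDist (D.ArcFrom univ) w (p 0) (p b) + ∑ e ∈ E, w e + w (p c) := by
  obtain hqc | ⟨v, hqv, hvp, hvc⟩ := hqc.cases_tail
  · exact absurd ⟨c, hc, hqc⟩ hqp
  have hreach_b : D.ReachesThrough univ (p 0) (p b) :=
    (hp.reachesThrough hb).mono (subset_univ _)
  have hreach {a : V} (ha : D.ReachesThrough (p '' Iic n)ᶜ q a) :
      D.ReachesThrough univ (p 0) a :=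
    (hreach_b.tail ⟨mem_univ _, hbq⟩).trans (ha.mono (subset_univ _))
  obtain ⟨E, hvE, hbetween, hbound⟩ := exists_finset_between
    (fun a a' ha haa' => weightDist_le_add w (hreach ha) ⟨mem_univ _, haa'.2⟩) hqv
  refine ⟨E, fun e he => ?_, ?_⟩
  · obtain ⟨hqe, hev⟩ := hbetween e he
    exact ⟨ReachesThrough.mem hev hvp, hqe, hev.tail ⟨hvp, hvc⟩⟩
  · have hdist_q := weightDist_le_add w hreach_b ⟨mem_univ _, hbq⟩
    have hdist_v := hbound v hvE
    have hdist_c := weightDist_le_add w (hreach hqv) ⟨mem_univ _, hvc⟩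
    omega

theorem IsGeodesic.visits_le_add_ncard_feeders_sdiff [Finite V] {b c t : ℕ} {q : V}
    (hp : IsGeodesic (D.ArcFrom univ) (lexWeight L) p n)
    (hb : b < t) (hc : c ∈ Icc t n) (hbq : (p b, q) ∈ D.arcs) (hqp : q ∉ p '' Iic n)
    (hqc : D.ReachesThrough (p '' Iic n)ᶜ q (p c)) (hq : q ∉ D.feeders p n (c + 1)) :
    visits L p c ≤ visits L p t + (L ∩ (D.feeders p n t \ D.feeders p n (c + 1))).ncard := by
  have hbn : b ≤ n := hb.le.trans (hc.1.trans hc.2)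
  obtain ⟨E, hE, hdetour⟩ := hp.exists_finset_weightDist_le hbn hc.2 hbq hqp hqc
  have hEsub : (E : Set V) ⊆ D.feeders p n t \ D.feeders p n (c + 1) := by
    intro e he
    obtain ⟨hep, hqe, hec⟩ := hE e he
    exact ⟨⟨hep, c, hc, hec⟩, fun he' => hq (mem_feeders_of_reachesThrough he' hqe)⟩
  have hcompare := hp.add_visits_le hbn hc.2 hdetour
  rw [sum_lexWeight] at hcompare
  have hcard : E.card ≤ Nat.card V := by
    rw [← ncard_coe_finset]; exact ncard_le_card _
  have hvisits : visits L p c ≤ visits L p (b + 1) + (L ∩ E).ncard := by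
    by_contra! hlt
    have hscaled := Nat.mul_le_mul_left (Nat.card V + 1) (Nat.succ_le_of_lt hlt)
    have hbc := hb.trans_le hc.1
    rw [Nat.succ_eq_add_one, mul_add, mul_add] at hscaled
    omega
  exact hvisits.trans (add_le_add (visits_mono L p hb)
    (ncard_le_ncard (inter_subset_inter_right L hEsub)))

end Ears

section LeafCount

variable {D T : DirGraph V} {p : ℕ → V} {n : ℕ} {r x : V}

theorem exists_notMem_arcs_visits_succ_le [Finite V] (T : DirGraph V) (p : ℕ → V) {c : ℕ}
    (hc : c ≤ n) : ∃ s ∈ Icc c n, (s < n → (p s, p (s + 1)) ∉ T.arcs) ∧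
      visits T.leaves p (s + 1) ≤ visits T.leaves p c + 1 := by
  induction hc using Nat.decreasingInduction with
  | self => exact ⟨n, ⟨le_rfl, le_rfl⟩, fun h => absurd h (lt_irrefl n), visits_succ_le _ _ _⟩
  | of_succ c hc ih =>
    by_cases harc : (p c, p (c + 1)) ∈ T.arcs
    · obtain ⟨s, hs, hsarc, hvisits⟩ := ih
      rw [visits_succ_of_notMem fun hleaf => notMem_arcs_of_mem_leaves hleaf _ harc] at hvisits
      exact ⟨s, ⟨Nat.le_of_succ_le hs.1, hs.2⟩, hsarc, hvisits⟩
    · exact ⟨c, ⟨le_rfl, hc.le⟩, fun _ => harc, visits_succ_le _ _ _⟩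

theorem ncard_inter_sdiff_add_ncard_inter [Finite V] {A B X : Set V} (hAB : A ⊆ B) :
    (X ∩ (B \ A)).ncard + (X ∩ A).ncard = (X ∩ B).ncard := by
  rw [inter_sdiff_distrib_left, ncard_sdiff_add_ncard_of_subset (inter_subset_inter_right X hAB)]

/-- What the leaves of `T` among `p t, …, p n` are charged to: the feeders of this part of the path
that lie on the out-boundary of the path or are leaves of `T`, those with both properties counting
twice. -/
noncomputable def credit (D T : DirGraph V) (p : ℕ → V) (n t : ℕ) : ℕ :=
  (D.outBoundary (p '' Iic n) ∩ D.feeders p n t).ncard + (T.leaves ∩ D.feeders p n t).ncard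

theorem credit_anti [Finite V] (D T : DirGraph V) (p : ℕ → V) (n : ℕ) :
    Antitone (credit D T p n) := fun _ _ hst =>
  add_le_add (ncard_le_ncard (inter_subset_inter_right _ (feeders_anti D p n hst)))
    (ncard_le_ncard (inter_subset_inter_right _ (feeders_anti D p n hst)))

theorem IsGeodesic.exists_visits_add_credit_lt [Finite V] {t : ℕ} {u : V}
    (hp : IsGeodesic (D.ArcFrom univ) (lexWeight T.leaves) p n) (ht : t + 1 ≤ n)
    (hu : (u, p (t + 1)) ∈ D.arcs) (hut : u ≠ p t) (hut' : u ≠ p (t + 1))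
    (hreach : D.ReachesThrough (univ \ {p (t + 1)}) (p 0) u) :
    ∃ c ∈ Icc (t + 1) n, visits T.leaves p c + credit D T p n (c + 1) <
      visits T.leaves p (t + 1) + credit D T p n (t + 1) := by
  obtain ⟨b, hb, q, hq, hbq⟩ := hp.exists_arc_mem_feeders ht hu hut hut' hreach
  obtain ⟨c, hc, hqc, hqc'⟩ := exists_reachesThrough_notMem_feeders hq
  have hbn : b ≤ n := hb.trans (Nat.le_of_succ_le ht)
  have hvisits := hp.visits_le_add_ncard_feeders_sdiff (t := t + 1) (by omega) hc hbq hq.1 hqc hqc'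
  have hboundary : 0 < (D.outBoundary (p '' Iic n) ∩
      (D.feeders p n (t + 1) \ D.feeders p n (c + 1))).ncard :=
    (ncard_pos).2 ⟨q, ⟨hq.1, p b, ⟨b, hbn, rfl⟩, hbq⟩, hq, hqc'⟩
  have hfeeders : D.feeders p n (c + 1) ⊆ D.feeders p n (t + 1) :=
    feeders_anti D p n (Nat.le_succ_of_le hc.1)
  have hsplit_boundary :=
    ncard_inter_sdiff_add_ncard_inter (X := D.outBoundary (p '' Iic n)) hfeeders
  have hsplit_leaves := ncard_inter_sdiff_add_ncard_inter (X := T.leaves) hfeeders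
  refine ⟨c, hc, ?_⟩
  unfold credit
  omega

theorem IsGeodesic.visits_le_add_credit [Finite V] (hT : T.IsOutTreeOf D (p n))
    (hp : IsGeodesic (D.ArcFrom univ) (lexWeight T.leaves) p n) (hD : D.WellFormed)
    (hentry : ∀ u v, (u, v) ∈ T.arcs → D.ReachesThrough (univ \ {v}) (p 0) u) {s : ℕ}
    (hs : s ≤ n) (harc : s < n → (p s, p (s + 1)) ∉ T.arcs) :
    visits T.leaves p (n + 1) ≤ visits T.leaves p (s + 1) + credit D T p n (s + 1) + 1 := by
  induction hk : n - s using Nat.strong_induction_on generalizing s with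
  | _ k ih =>
    obtain rfl | hsn := eq_or_lt_of_le hs
    · omega
    by_cases hmem : p (s + 1) ∈ T.verts
    swap
    · have hstep := ih _ (by omega) hsn (fun _ h => hmem (hT.1.arcs_mem _ h).1) rfl
      rw [visits_succ_of_notMem (m := s + 1) fun hleaf => hmem hleaf.1] at hstep
      have hcredit : credit D T p n (s + 1 + 1) ≤ credit D T p n (s + 1) :=
        credit_anti D T p n (Nat.le_succ _)
      rw [Nat.succ_eq_add_one] at hstep
      omega
    obtain hroot | hroot := eq_or_ne (p (s + 1)) (p n)
    · obtain rfl : s + 1 = n := hp.injOn hsn (mem_Iic.2 le_rfl) hroot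
      have hlast := visits_succ_le T.leaves p (s + 1)
      omega
    obtain ⟨u, hu⟩ := hT.1.exists_arc hmem hroot
    have hus : u ≠ p s := by rintro rfl; exact harc hsn hu
    have huD := hT.2.2 hu
    obtain ⟨c, hc, hear⟩ :=
      hp.exists_visits_add_credit_lt hsn huD hus (hD.ne huD) (hentry _ _ hu)
    obtain ⟨s', hs', harc', hrun⟩ := exists_notMem_arcs_visits_succ_le T p hc.2
    have hcs' : s < s' := Nat.lt_of_succ_le (hc.1.trans hs'.1)
    have hstep := ih _ (by omega) hs'.2 harc' rfl
    have hcredit : credit D T p n (s' + 1) ≤ credit D T p n (c + 1) :=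
      credit_anti D T p n (Nat.succ_le_succ hs'.1)
    omega

theorem IsGeodesic.ncard_leaves_inter_le [Finite V] (hT : T.IsOutTreeOf D (p n))
    (hp : IsGeodesic (D.ArcFrom univ) (lexWeight T.leaves) p n) (hD : D.WellFormed)
    (hentry : ∀ u v, (u, v) ∈ T.arcs → D.ReachesThrough (univ \ {v}) (p 0) u)
    (h0 : p 0 ∉ T.verts) :
    (T.leaves ∩ p '' Iic n).ncard ≤
      (D.outBoundary (p '' Iic n)).ncard + (T.leaves \ p '' Iic n).ncard + 1 := by
  have hpath := ncard_inter_image_Iic_le_visits T.leaves p n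
  have hvisits := hp.visits_le_add_credit hT hD hentry n.zero_le fun _ h => h0 (hT.1.arcs_mem _ h).1
  rw [zero_add, visits_succ_of_notMem (m := 0) fun h => h0 h.1] at hvisits
  have hvisits_zero : visits T.leaves p 0 = 0 := rfl
  have hboundary : (D.outBoundary (p '' Iic n) ∩ D.feeders p n 1).ncard ≤
      (D.outBoundary (p '' Iic n)).ncard := ncard_le_ncard inter_subset_left
  have hleaves : (T.leaves ∩ D.feeders p n 1).ncard ≤ (T.leaves \ p '' Iic n).ncard :=
    ncard_le_ncard fun _ hq => ⟨hq.1, hq.2.1⟩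
  unfold credit at hvisits
  omega

theorem IsOutTreeOf.ncard_leaves_le_three_mul_ellS_add_one [Finite V] (hT : T.IsOutTreeOf D x)
    (hD : D.WellFormed) (hr : r ∈ D.verts)
    (hreach : ∀ v ∈ D.verts, D.ReachesThrough univ r v) (hu : ∀ a ∈ D.arcs, ¬ Useless D a) :
    T.leaves.ncard ≤ 3 * ellS D + 1 := by
  have hx := hT.2.1 hT.1.root_mem
  by_cases hxr : D.ReachesThrough univ x r
  · have hleaves := hT.ncard_leaves_sdiff_le_ellS hD hx (fun v hv => hxr.trans (hreach v hv))
      (isOutConnected_singleton D x) rfl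
    have hsplit := ncard_le_ncard_sdiff_add_ncard T.leaves {x}
    rw [ncard_singleton] at hsplit
    omega
  · have hnot_reach : ∀ v ∈ T.verts, ¬ D.ReachesThrough univ v r := fun v hv hvr => hxr
      (((hT.1.reach_root v hv).reachesThrough.of_arcs_subset hT.2.2).trans hvr)
    have hentry : ∀ u v, (u, v) ∈ T.arcs → D.ReachesThrough (univ \ {v}) r u := fun u v huv =>
      reachesThrough_sdiff_head_of_not_useless hr hreach (hu _ (hT.2.2 huv))
        (hnot_reach v (hT.1.arcs_mem _ huv).2)
    obtain ⟨n, p, rfl, rfl, hp⟩ := exists_isGeodesic (lexWeight T.leaves) (hreach x hx)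
    have hon := hp.ncard_leaves_inter_le hT hD hentry fun h0 => hnot_reach _ h0 .refl
    have hboundary := hp.isOutConnected.ncard_outBoundary_le_ellS hD hr hreach
    have hoff := hT.ncard_leaves_sdiff_le_ellS hD hr hreach hp.isOutConnected
      ⟨n, mem_Iic.2 le_rfl, rfl⟩
    have hsplit := ncard_inter_add_ncard_sdiff_eq_ncard T.leaves (p '' Iic n)
    omega

end LeafCount

theorem ellS_ge_of_ell_ge_three_mul {V : Type} [Fintype V]
    (D : DirGraph V) (k : ℕ) (hD : D.WellFormed)
    (hbr : ∃ (T : DirGraph V) (r : V), IsOutBranching T D r)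
    (hu : ∀ a ∈ D.arcs, ¬ Useless D a)
    (hk : 3 * k ≤ ell D) : k ≤ ellS D := by
  obtain ⟨B, r, ⟨hB, hBD⟩, hspan⟩ := hbr
  have hreach : ∀ v ∈ D.verts, D.ReachesThrough univ r v := fun v hv =>
    (hB.reach_root v (hspan ▸ hv)).reachesThrough.of_arcs_subset hBD.2
  obtain ⟨T, x, hT, hleaves⟩ := IsOutTreeOf.exists_ncard_leaves_eq_ell ⟨hB, hBD⟩
  have hbound := hT.ncard_leaves_le_three_mul_ellS_add_one hD (hBD.1 hB.root_mem) hreach hu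
  omega

end DirGraph
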